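/- Conjunctive Bounding Lemma, part (ii): Let U_1 and U_2 be two TA templates with conjunctive guards, let Φ(1_1) be an IMTL formula over the first instance of U_1, and let Q ∈ {E, E_inf, E_fin}. Set c_1 = 1 if Q = E_inf, c_1 = 1 if Q = E_fin, and c_1 = 2|U_2| if Q = E. Then for every n ≥ c_1: if (U_1,U_2)^{(1,n)} ⊨ Q Φ(1_1) then (U_1,U_2)^{(1,c_1)} ⊨ Q Φ(1_1). -/

import Mathlib

open scoped ENNReal NNReal

namespace PNTA

/-! ### Basic ingredients: comparisons and clock constraints -/

/-- Comparison operators `<, ≤, >, ≥, =`. -/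
inductive Cmp : Type
  | lt | le | gt | ge | eq

/-- Evaluation of a comparison operator on nonnegative reals. -/
def Cmp.eval : Cmp → NNReal → NNReal → Prop
  | .lt, a, b => a < b
  | .le, a, b => a ≤ b
  | .gt, a, b => b < a
  | .ge, a, b => b ≤ a
  | .eq, a, b => a = b

/-- Clock constraints `TC(C)`: Boolean combinations of comparisons of clocks with
clocks or with nonnegative rational constants. -/
inductive ClockConstraint (C : Type) : Type
  | tt
  | neg (g : ClockConstraint C)
  | disj (g₁ g₂ : ClockConstraint C)
  | cmpClock (op : Cmp) (c₁ c₂ : C)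
  | cmpConst (op : Cmp) (c : C) (q : ℚ≥0)

/-- Satisfaction of a clock constraint by a clock valuation. -/
def ClockConstraint.sat {C : Type} (u : C → NNReal) : ClockConstraint C → Prop
  | .tt => True
  | .neg g => ¬ g.sat u
  | .disj g₁ g₂ => g₁.sat u ∨ g₂.sat u
  | .cmpClock op c₁ c₂ => op.eval (u c₁) (u c₂)
  | .cmpConst op c q => op.eval (u c) (q : NNReal)

/-! ### Parameterized networks of timed automata with conjunctive guards -/

/-- A parameterized network of `k` timed automaton templates
`U_l = ⟨S_l, ŝ_l, C_l, Γ_l, τ_l, I_l⟩` with **conjunctive guards**.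
A conjunctive guard assigns to every template `h` a set of states of `U_h`
(the disjunction `ŝ_h ∨ s_h¹ ∨ ⋯`), which must contain the initial state `ŝ_h`;
it is satisfied by a global state when every *other* instance of every template `h`
is in a state belonging to the corresponding set. -/
structure ConjPNTA (k : ℕ) : Type 1 where
  /-- states of each template -/
  State : Fin k → Type
  stateFintype : ∀ l, Fintype (State l)
  /-- initial state of each template -/
  init : ∀ l, State l
  /-- clock variables of each template -/
  Clock : Fin k → Type
  clockFintype : ∀ l, Fintype (Clock l)
  /-- transitions `s —(g,r,γ)→ t`: source, clock constraint, reset set, conjunctive guard, target -/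
  trans : ∀ l, Set (State l × ClockConstraint (Clock l) × Set (Clock l) ×
      ((h : Fin k) → Set (State h)) × State l)
  trans_finite : ∀ l, (trans l).Finite
  /-- guards are conjunctive: every disjunct contains the initial state -/
  guards_conj : ∀ l tr, tr ∈ trans l → ∀ h, init h ∈ tr.2.2.2.1 h
  /-- state invariants -/
  inv : ∀ l, State l → ClockConstraint (Clock l)
  inv_init : ∀ l, inv l (init l) = ClockConstraint.tt

variable {k : ℕ}

/-- `|U_l|`: the number of states of template `l`. -/
def ConjPNTA.size (A : ConjPNTA k) (l : Fin k) : ℕ :=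
  @Fintype.card (A.State l) (A.stateFintype l)

lemma ConjPNTA.size_pos (A : ConjPNTA k) (l : Fin k) : 0 < A.size l :=
  @Fintype.card_pos _ (A.stateFintype l) ⟨A.init l⟩

/-- A configuration of the PNTA `(U_1,…,U_k)^{(n_1,…,n_k)}`: each instance `U_l^i`
(`l < k`, `i < n_l`) has a current state and a clock valuation satisfying the
invariant of that state. -/
structure Config (A : ConjPNTA k) (n : Fin k → ℕ) : Type where
  st : ∀ l, Fin (n l) → A.State l
  cl : ∀ l, Fin (n l) → A.Clock l → NNReal
  inv_sat : ∀ l i, (A.inv l (st l i)).sat (cl l i)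

/-- The initial configuration: every instance in its initial state, all clocks `0`. -/
def initConfig (A : ConjPNTA k) (n : Fin k → ℕ) : Config A n where
  st := fun l _ => A.init l
  cl := fun _ _ _ => 0
  inv_sat := fun l _ => by rw [A.inv_init l]; exact trivial

/-- The global state of configuration `c` satisfies the conjunctive guard `γ`
from the point of view of instance `(l, i)`: every other instance is in one of
the allowed states. -/
def guardSat {A : ConjPNTA k} {n : Fin k → ℕ} (c : Config A n) (l : Fin k) (i : Fin (n l))
    (γ : (h : Fin k) → Set (A.State h)) : Prop :=
  ∀ p : Σ h, Fin (n h), p ≠ ⟨l, i⟩ → c.st p.1 p.2 ∈ γ p.1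

/-- Delay transition `c →d c'`: all clocks of all instances advance by `d`,
states are unchanged, and all invariants hold throughout the delay. -/
def DelayStep {A : ConjPNTA k} {n : Fin k → ℕ} (d : NNReal) (c c' : Config A n) : Prop :=
  c'.st = c.st ∧
  (∀ l i x, c'.cl l i x = c.cl l i x + d) ∧
  (∀ l i (d' : NNReal), d' ≤ d → (A.inv l (c.st l i)).sat fun x => c.cl l i x + d')

/-- Synchronization transition `c →γ c'`: exactly one instance `U_l^i` fires a
transition `s —(g,r,γ)→ t` of `τ_l`; its current state is `s`, its clocks satisfy `g`,
the global state satisfies the conjunctive guard `γ`, its clocks in `r` are reset to 0,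
and all other instances are unchanged. -/
def SyncStep {A : ConjPNTA k} {n : Fin k → ℕ} (c c' : Config A n) : Prop :=
  ∃ (l : Fin k) (i : Fin (n l)), ∃ tr ∈ A.trans l,
    tr.1 = c.st l i ∧
    tr.2.1.sat (c.cl l i) ∧
    guardSat c l i tr.2.2.2.1 ∧
    c'.st l i = tr.2.2.2.2 ∧
    (∀ x, (x ∈ tr.2.2.1 → c'.cl l i x = 0) ∧ (x ∉ tr.2.2.1 → c'.cl l i x = c.cl l i x)) ∧
    (∀ p : Σ h, Fin (n h), p ≠ ⟨l, i⟩ → c'.st p.1 p.2 = c.st p.1 p.2 ∧ c'.cl p.1 p.2 = c.cl p.1 p.2)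

/-- A step of a timed computation: a delay transition with positive delay
(time advances accordingly) or a synchronization transition (time unchanged). -/
def Step {A : ConjPNTA k} {n : Fin k → ℕ} (c c' : Config A n) (t t' : NNReal) : Prop :=
  (∃ d : NNReal, 0 < d ∧ DelayStep d c c' ∧ t' = t + d) ∨ (SyncStep c c' ∧ t' = t)

/-- A timed computation starting at configuration `c₀` at time `0`: a finite or
infinite sequence of configuration/time pairs (represented as a partial function
on positions with downward closed domain) whose consecutive elements are related
by delay or synchronization transitions. -/
structure TimedComp (A : ConjPNTA k) (n : Fin k → ℕ) (c₀ : Config A n) : Type where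
  seq : ℕ → Option (Config A n × NNReal)
  zero_def : seq 0 = some (c₀, 0)
  downward : ∀ v, (seq (v + 1)).isSome → (seq v).isSome
  step : ∀ v c t c' t', seq v = some (c, t) → seq (v + 1) = some (c', t') → Step c c' t t'

namespace TimedComp

variable {A : ConjPNTA k} {n : Fin k → ℕ} {c₀ : Config A n}

/-- An infinite timed computation. -/
def Infinite (x : TimedComp A n c₀) : Prop := ∀ v, (x.seq v).isSome

/-- A (not necessarily maximal) finite timed computation. -/
def Finite (x : TimedComp A n c₀) : Prop := ∃ v, x.seq v = none

/-- A deadlocked timed computation: maximal finite, i.e. all transitions are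
disabled at its final configuration. -/
def Deadlocked (x : TimedComp A n c₀) : Prop :=
  ∃ v c t, x.seq v = some (c, t) ∧ x.seq (v + 1) = none ∧
    ∀ c' : Config A n, ¬ ((∃ d : NNReal, 0 < d ∧ DelayStep d c c') ∨ SyncStep c c')

/-- The time stamp at position `v` (junk value `0` outside the domain). -/
def timeAt (x : TimedComp A n c₀) (v : ℕ) : NNReal := ((x.seq v).map Prod.snd).getD 0

end TimedComp

/-! ### s-paths (continuous-time signals induced by timed computations) -/

/-- An s-path: a continuous-time signal of configurations, together with its
(possibly infinite) length. -/
structure SPath (A : ConjPNTA k) (n : Fin k → ℕ) : Type where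
  len : ℝ≥0∞
  toFun : NNReal → Config A n

/-- The suffix `ρ⌊t` of an s-path. -/
noncomputable def SPath.suffix {A : ConjPNTA k} {n : Fin k → ℕ} (ρ : SPath A n) (t : NNReal) : SPath A n where
  len := ρ.len - (t : ℝ≥0∞)
  toFun := fun s => ρ.toFun (t + s)

/-- The timed computation `x` induces the s-path `ρ`: for every step of `x` from
`(c_v,t_v)` to `(c_{v+1},t_{v+1})` and every time `s ∈ [t_v, t_{v+1})`, `ρ(s)` has
the states of `c_v` with clocks advanced by `s - t_v`; the length of `ρ` is the
supremum of the time stamps (for an infinite computation), resp. the final time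
stamp (for a finite one, at which the final configuration persists). -/
def Induces {A : ConjPNTA k} {n : Fin k → ℕ} {c₀ : Config A n}
    (x : TimedComp A n c₀) (ρ : SPath A n) : Prop :=
  (∀ v c t c' t', x.seq v = some (c, t) → x.seq (v + 1) = some (c', t') →
    ∀ s : NNReal, t ≤ s → s < t' →
      (ρ.toFun s).st = c.st ∧ ∀ l i cx, (ρ.toFun s).cl l i cx = c.cl l i cx + (s - t)) ∧
  (x.Infinite → ρ.len = ⨆ v, (x.timeAt v : ℝ≥0∞)) ∧
  (∀ v c t, x.seq v = some (c, t) → x.seq (v + 1) = none →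
    ρ.len = (t : ℝ≥0∞) ∧ (ρ.toFun t).st = c.st ∧ ∀ l i cx, (ρ.toFun t).cl l i cx = c.cl l i cx)

/-- `tcomp(ρ)`: the set of timed computations (from `c₀`) inducing the s-path `ρ`. -/
def tcomp {A : ConjPNTA k} {n : Fin k → ℕ} (c₀ : Config A n) (ρ : SPath A n) :
    Set (TimedComp A n c₀) :=
  {x | Induces x ρ}

/-- `|ρ| = ω` : `ρ` is (induced by) an infinite timed computation from `c₀`. -/
def SPath.IsInfiniteFrom {A : ConjPNTA k} {n : Fin k → ℕ} (c₀ : Config A n) (ρ : SPath A n) : Prop :=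
  ∃ x : TimedComp A n c₀, Induces x ρ ∧ x.Infinite

/-- `|ρ| < ω` : `ρ` is induced by a finite timed computation from `c₀`. -/
def SPath.IsFiniteFrom {A : ConjPNTA k} {n : Fin k → ℕ} (c₀ : Config A n) (ρ : SPath A n) : Prop :=
  ∃ x : TimedComp A n c₀, Induces x ρ ∧ x.Finite

/-- `deadlock(ρ)` : `ρ` is induced by a deadlocked timed computation from `c₀`. -/
def SPath.IsDeadlockedFrom {A : ConjPNTA k} {n : Fin k → ℕ} (c₀ : Config A n) (ρ : SPath A n) : Prop :=
  ∃ x : TimedComp A n c₀, Induces x ρ ∧ x.Deadlocked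

/-! ### IMTL formulae and their continuous-time semantics -/

/-- IMTL path formulae over atomic propositions `α`: built from `⊤` and atoms by
Boolean operators (`∧`, `¬`) and time-constrained until `Φ U_{∼q} Ψ` with
`∼ ∈ {<,≤,>,≥,=}` and `q ∈ ℚ≥0`. -/
inductive IMTL (α : Type) : Type
  | tt
  | atom (a : α)
  | and (φ ψ : IMTL α)
  | not (φ : IMTL α)
  | untl (op : Cmp) (q : ℚ≥0) (φ ψ : IMTL α)

/-- Satisfaction of an IMTL path formula on an s-path, given a valuation of the
atomic propositions on configurations. -/
def satIMTL {A : ConjPNTA k} {n : Fin k → ℕ} {α : Type} (val : α → Config A n → Prop) :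
    IMTL α → SPath A n → Prop
  | .tt, _ => True
  | .atom a, ρ => val a (ρ.toFun 0)
  | .and φ ψ, ρ => satIMTL val φ ρ ∧ satIMTL val ψ ρ
  | .not φ, ρ => ¬ satIMTL val φ ρ
  | .untl op q φ ψ, ρ => ∃ t' : NNReal, (t' : ℝ≥0∞) ≤ ρ.len ∧ op.eval t' (q : NNReal) ∧
      satIMTL val ψ (ρ.suffix t') ∧ ∀ t : NNReal, t < t' → satIMTL val φ (ρ.suffix t)

/-- The six path quantifiers `A, A_inf, A_fin, E, E_inf, E_fin`. -/
inductive PathQ : Type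
  | A | Ainf | Afin | E | Einf | Efin

/-- `(U_1,…,U_k)^{(n_1,…,n_k)} ⊨ Q Φ` for a path quantifier `Q`: quantification over
the s-paths from the initial configuration that are infinite or deadlocked (`A`, `E`),
infinite (`A_inf`, `E_inf`), resp. finite (`A_fin`, `E_fin`). -/
def SatQ (A : ConjPNTA k) (n : Fin k → ℕ) {α : Type} (val : α → Config A n → Prop)
    (Q : PathQ) (Φ : IMTL α) : Prop :=
  match Q with
  | .A => ∀ ρ : SPath A n,
      (ρ.IsInfiniteFrom (initConfig A n) ∨ ρ.IsDeadlockedFrom (initConfig A n)) → satIMTL val Φ ρ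
  | .Ainf => ∀ ρ : SPath A n, ρ.IsInfiniteFrom (initConfig A n) → satIMTL val Φ ρ
  | .Afin => ∀ ρ : SPath A n, ρ.IsFiniteFrom (initConfig A n) → satIMTL val Φ ρ
  | .E => ∃ ρ : SPath A n,
      (ρ.IsInfiniteFrom (initConfig A n) ∨ ρ.IsDeadlockedFrom (initConfig A n)) ∧ satIMTL val Φ ρ
  | .Einf => ∃ ρ : SPath A n, ρ.IsInfiniteFrom (initConfig A n) ∧ satIMTL val Φ ρ
  | .Efin => ∃ ρ : SPath A n, ρ.IsFiniteFrom (initConfig A n) ∧ satIMTL val Φ ρ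

/-- Atomic propositions of the indexed formula `Φ(i_{l₁},…,i_{l_h})`: a quantified
slot `j < h` together with a state (= atomic proposition) of template `l_j`. -/
def Atoms (A : ConjPNTA k) {h : ℕ} (l : Fin h → Fin k) : Type :=
  Σ j : Fin h, A.State (l j)

/-- The valuation of the atoms, given an assignment `inst` of concrete instances to
the quantified slots: `p(l_j, i_{l_j})` holds iff instance `i_{l_j}` of template `l_j`
is in state `p`. -/
def atomVal (A : ConjPNTA k) (n : Fin k → ℕ) {h : ℕ} (l : Fin h → Fin k)
    (inst : ∀ j : Fin h, Fin (n (l j))) : Atoms A l → Config A n → Prop :=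
  fun a c => c.st (l a.1) (inst a.1) = a.2

/-- `(U_1,…,U_k)^{(n_1,…,n_k)} ⊨ ⋀_{i_{l₁},…,i_{l_h}} Q Φ(i_{l₁},…,i_{l_h})`. -/
def SatFormula (A : ConjPNTA k) (n : Fin k → ℕ) {h : ℕ} (l : Fin h → Fin k)
    (Q : PathQ) (Φ : IMTL (Atoms A l)) : Prop :=
  ∀ inst : ∀ j : Fin h, Fin (n (l j)), SatQ A n (atomVal A n l inst) Q Φ

/-! ### Helpers for networks of two templates -/

/-- The size function of the system `(U₁,U₂)^{(a,b)}`. -/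
def two (a b : ℕ) : Fin 2 → ℕ := fun m => if m.val = 0 then a else b

/-- The valuation interpreting the atoms of a formula `Φ(1_t)` over the *first*
instance of template `t`. -/
def valFirst (A : ConjPNTA 2) (n : Fin 2 → ℕ) (t : Fin 2) (hp : 0 < n t) :
    A.State t → Config A n → Prop :=
  fun p c => c.st t ⟨0, hp⟩ = p


/-! ### Cutoffs for two-template systems -/

/-- Cutoff for the template tracked by the formula `Φ(1₂)` (part (i)):
`2` for `E_inf`, `1` for `E_fin`, `2|U₂| + 1` for `E`. -/
def cutoffTracked (A : ConjPNTA 2) : PathQ → ℕ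
  | PathQ.Einf => 2
  | PathQ.Efin => 1
  | PathQ.E => 2 * A.size 1 + 1
  | _ => 1

/-- Cutoff for the untracked template (part (ii)):
`1` for `E_inf`, `1` for `E_fin`, `2|U₂|` for `E`. -/
def cutoffOther (A : ConjPNTA 2) : PathQ → ℕ
  | PathQ.Einf => 1
  | PathQ.Efin => 1
  | PathQ.E => 2 * A.size 1
  | _ => 1

lemma cutoffTracked_pos (A : ConjPNTA 2) (Q : PathQ) : 0 < cutoffTracked A Q := by
  have := A.size_pos 1
  cases Q <;> simp only [cutoffTracked] <;> omega

lemma cutoffOther_pos (A : ConjPNTA 2) (Q : PathQ) : 0 < cutoffOther A Q := by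
  have := A.size_pos 1
  cases Q <;> simp only [cutoffOther] <;> omega

/-! ### Stuttering, reindexings and local computations -/

/-- `y` is a *stuttering* of `x`: it is obtained from `x` by inserting, between
consecutive elements, finitely many intermediate observations of the same states
with clocks advanced by small delays `δ`, without altering the original elements.
The map `m` sends a position of `y` to the position of `x` it refines. -/
def Stuttering {A : ConjPNTA k} {n : Fin k → ℕ} {c₀ : Config A n}
    (y x : TimedComp A n c₀) : Prop :=
  ∃ m : ℕ → ℕ, Monotone m ∧ m 0 = 0 ∧
    (∀ w, (y.seq w).isSome → (x.seq (m w)).isSome) ∧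
    (∀ w, y.seq w = none → ∃ v, x.seq v = none) ∧
    (∀ v, Set.Finite {w | (y.seq w).isSome ∧ m w = v}) ∧
    (∀ v, (x.seq v).isSome → ∃ w, m w = v ∧ y.seq w = x.seq v) ∧
    (∀ w cy ty cx tx, y.seq w = some (cy, ty) → x.seq (m w) = some (cx, tx) →
      tx ≤ ty ∧ cy.st = cx.st ∧ (∀ l i cxk, cy.cl l i cxk = cx.cl l i cxk + (ty - tx)) ∧
      ∀ cx' tx', x.seq (m w + 1) = some (cx', tx') → ty ≤ tx')

/-- A reindexing of positions between a timed computation `x` and a timed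
computation `y` obtained from `x` by collapsing some steps. -/
def Reindex {A : ConjPNTA k} {n n' : Fin k → ℕ} {c₀ : Config A n} {c₀' : Config A n'}
    (x : TimedComp A n c₀) (y : TimedComp A n' c₀') (m : ℕ → ℕ) : Prop :=
  Monotone m ∧ m 0 = 0 ∧
    (∀ v, (x.seq v).isSome → (y.seq (m v)).isSome) ∧
    (∀ w, (y.seq w).isSome → ∃ v, (x.seq v).isSome ∧ m v = w)

/-- The local timed computation of instance `(l, iy)` of `y` coincides (through the
reindexing `m`) with the local timed computation of instance `(l, ix)` of `x`:
same times, same states, same clock values. -/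
def LocalMatch {A : ConjPNTA k} {n n' : Fin k → ℕ} {c₀ : Config A n} {c₀' : Config A n'}
    (x : TimedComp A n c₀) (y : TimedComp A n' c₀') (m : ℕ → ℕ)
    (l : Fin k) (ix : Fin (n l)) (iy : Fin (n' l)) : Prop :=
  ∀ v c t c' t', x.seq v = some (c, t) → y.seq (m v) = some (c', t') →
    t' = t ∧ c'.st l iy = c.st l ix ∧ c'.cl l iy = c.cl l ix

/-- Instance `(l, i)` of `y` follows the idle local computation: it stutters in the
initial state `ŝ_l` with all its clocks equal to the elapsed time. -/
def IdleLocal {A : ConjPNTA k} {n : Fin k → ℕ} {c₀ : Config A n}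
    (y : TimedComp A n c₀) (l : Fin k) (i : Fin (n l)) : Prop :=
  ∀ v c t, y.seq v = some (c, t) → c.st l i = A.init l ∧ ∀ cx, c.cl l i cx = t

/-- The local computation of instance `(l, i)` of `x` is infinite: the instance takes
infinitely many (observable) synchronization steps. -/
def LocalInfinite {A : ConjPNTA k} {n : Fin k → ℕ} {c₀ : Config A n}
    (x : TimedComp A n c₀) (l : Fin k) (i : Fin (n l)) : Prop :=
  ∀ N, ∃ v, N ≤ v ∧ ∃ c t c' t', x.seq v = some (c, t) ∧ x.seq (v + 1) = some (c', t') ∧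
    t' = t ∧ ¬ (c'.st l i = c.st l i ∧ c'.cl l i = c.cl l i)

lemma two_le_two_succ (n : ℕ) (l : Fin 2) : two 1 n l ≤ two 1 (n + 1) l := by
  unfold two; split <;> omega

lemma c2two (A : ConjPNTA 2) {c₂ : ℕ} (hc : c₂ = 2 ∨ c₂ = 2 * A.size 1 + 1) : 1 < c₂ := by
  have := A.size_pos 1
  rcases hc with h | h <;> omega

lemma c2pos (A : ConjPNTA 2) {c₂ : ℕ} (hc : c₂ = 2 ∨ c₂ = 2 * A.size 1 + 1) : 0 < c₂ :=
  Nat.lt_of_lt_of_le Nat.one_pos (Nat.le_of_lt (c2two A hc))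

lemma npos (A : ConjPNTA 2) {c₂ n : ℕ} (hc : c₂ = 2 ∨ c₂ = 2 * A.size 1 + 1) (hn : c₂ ≤ n) :
    0 < n := Nat.lt_of_lt_of_le (c2pos A hc) hn

/-!
Forgetting instances of a network only weakens conjunctive guards, so a computation of the large
network, restricted to any selection of instances that contains the tracked one, is a computation
of the small network once the steps of forgotten instances are collapsed. It has the same time
stamps, hence induces the restricted s-path, which satisfies the same formulae over the tracked
instance. The cutoffs are the numbers of instances a selection needs to preserve more than that:
an infinite computation stays infinite if some instance taking part in infinitely many steps is
selected, and a deadlock remains a deadlock if one instance whose invariant blocks time is selected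
together with two instances, where available, for every occupied state: two, since an instance
is not subject to its own guards.
-/

/-! ### Collapsing the stuttering steps of a sequence -/

section Collapse

variable {β : Type*} {R : β → β → Prop} {s : ℕ → Option β}

/-- Positions `v` at which the partial sequence `s` makes a step related by `R`. -/
def IsStepAt (R : β → β → Prop) (s : ℕ → Option β) (v : ℕ) : Prop :=
  ∃ a b, s v = some a ∧ s (v + 1) = some b ∧ R a b

open Classical in
/-- The number of `R`-steps of `s` before position `v`. -/
noncomputable def stepCount (R : β → β → Prop) (s : ℕ → Option β) : ℕ → ℕ :=
  Nat.count (IsStepAt R s)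

/-- The partial sequence obtained from `s` by keeping only its `R`-steps. The definition is
meaningful when the elements of `s` with the same `stepCount` agree. -/
noncomputable def collapse (R : β → β → Prop) (s : ℕ → Option β) : ℕ → Option β :=
  Function.extend (fun v : {v // (s v).isSome} => stepCount R s v) (fun v => s v) fun _ => none

lemma monotone_stepCount : Monotone (stepCount R s) := by
  classical exact Nat.count_monotone _

lemma stepCount_zero : stepCount R s 0 = 0 := by
  classical exact Nat.count_zero _

lemma stepCount_succ_of_isStepAt {v : ℕ} (h : IsStepAt R s v) :
    stepCount R s (v + 1) = stepCount R s v + 1 := by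
  classical exact Nat.count_succ_eq_succ_count_iff.2 h

lemma surjective_stepCount (h : {v | IsStepAt R s v}.Infinite) :
    Function.Surjective (stepCount R s) := by
  classical exact Nat.surjective_count_of_infinite_setOfPred h

lemma exists_isStepAt_of_stepCount_eq_succ {v w : ℕ} (h : stepCount R s v = w + 1) :
    ∃ u, IsStepAt R s u ∧ stepCount R s u = w := by
  classical
  have hcard : ∀ hf : {v | IsStepAt R s v}.Finite, w < hf.toFinset.card := fun hf =>
    (Nat.lt_of_succ_le h.ge).trans_le (Nat.count_le_card hf v)
  exact ⟨Nat.nth (IsStepAt R s) w, Nat.nth_mem w hcard, Nat.count_nth hcard⟩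

variable (hdown : ∀ v, (s (v + 1)).isSome → (s v).isSome)
  (hstep : ∀ v a b, s v = some a → s (v + 1) = some b → R a b ∨ b = a)

include hdown hstep

lemma eq_of_stepCount_eq_of_le {u v : ℕ} (huv : u ≤ v) (hv : (s v).isSome)
    (h : stepCount R s u = stepCount R s v) : s u = s v := by
  induction v, huv using Nat.le_induction with
  | base => rfl
  | succ v huv ih =>
    have hcount : stepCount R s v = stepCount R s (v + 1) :=
      (monotone_stepCount v.le_succ).antisymm (h ▸ monotone_stepCount huv)
    obtain ⟨b, hb⟩ := Option.isSome_iff_exists.1 hv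
    obtain ⟨a, ha⟩ := Option.isSome_iff_exists.1 (hdown v hv)
    have hnot : ¬ R a b := fun hR => by
      have := stepCount_succ_of_isStepAt ⟨a, b, ha, hb, hR⟩
      omega
    rw [ih (hdown v hv) (h.trans hcount.symm), ha, hb, (hstep v a b ha hb).resolve_left hnot]

lemma factorsThrough_stepCount :
    Function.FactorsThrough (fun v : {v // (s v).isSome} => s v)
      fun v : {v // (s v).isSome} => stepCount R s v := by
  intro u v h
  rcases le_total u.1 v.1 with huv | hvu
  · exact eq_of_stepCount_eq_of_le hdown hstep huv v.2 h
  · exact (eq_of_stepCount_eq_of_le hdown hstep hvu u.2 h.symm).symm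

lemma collapse_stepCount {v : ℕ} (hv : (s v).isSome) : collapse R s (stepCount R s v) = s v :=
  (factorsThrough_stepCount hdown hstep).extend_apply (fun _ => none)
    (⟨v, hv⟩ : {v // (s v).isSome})

lemma exists_of_collapse_eq_some {w : ℕ} {b : β} (h : collapse R s w = some b) :
    ∃ v, s v = some b ∧ stepCount R s v = w := by
  by_cases hw : ∃ v : {v // (s v).isSome}, stepCount R s v = w
  · obtain ⟨⟨v, hv⟩, rfl⟩ := hw
    exact ⟨v, (collapse_stepCount hdown hstep hv).symm.trans h, rfl⟩
  · rw [collapse, Function.extend_apply' _ _ _ hw] at h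
    cases h

lemma exists_rel_of_collapse_succ {w : ℕ} {b : β} (h : collapse R s (w + 1) = some b) :
    ∃ a, collapse R s w = some a ∧ R a b := by
  obtain ⟨v, -, hvw⟩ := exists_of_collapse_eq_some hdown hstep h
  obtain ⟨u, hu, rfl⟩ := exists_isStepAt_of_stepCount_eq_succ hvw
  obtain ⟨a, b', ha, hb', hR⟩ := hu
  refine ⟨a, (collapse_stepCount hdown hstep (by simp [ha])).trans ha, ?_⟩
  rw [← stepCount_succ_of_isStepAt ⟨a, b', ha, hb', hR⟩,
    collapse_stepCount hdown hstep (by simp [hb']), hb'] at h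
  exact Option.some.inj h ▸ hR

end Collapse

/-! ### Projections of configurations -/

section Projection

variable {A : ConjPNTA k} {n m : Fin k → ℕ} {c c' : Config A n} {t t' : NNReal}

/-- A selection, for every template `l`, of `m l` of its `n l` instances. -/
abbrev Selection (m n : Fin k → ℕ) : Type := ∀ l, Fin (m l) ↪ Fin (n l)

/-- A selection as a map on the instances of all templates. -/
def Selection.inst (f : Selection m n) : (Σ l, Fin (m l)) ↪ Σ l, Fin (n l) :=
  Function.Embedding.sigmaMap (Function.Embedding.refl _) f

/-- The configuration of the selected instances. -/
def Config.project (f : Selection m n) (c : Config A n) : Config A m where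
  st := fun l i => c.st l (f l i)
  cl := fun l i => c.cl l (f l i)
  inv_sat := fun l i => c.inv_sat l (f l i)

/-- The s-path of the selected instances. -/
def SPath.project (f : Selection m n) (ρ : SPath A n) : SPath A m where
  len := ρ.len
  toFun := fun s => (ρ.toFun s).project f

lemma Config.eq_of_st_cl (hst : c.st = c'.st) (hcl : c.cl = c'.cl) : c = c' := by
  cases c
  cases c'
  cases hst
  cases hcl
  rfl

/-- Instance `p` fires a synchronization transition leading from `c` to `c'`. -/
def Fires (p : Σ l, Fin (n l)) (c c' : Config A n) : Prop :=
  ∃ tr ∈ A.trans p.1,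
    tr.1 = c.st p.1 p.2 ∧
    tr.2.1.sat (c.cl p.1 p.2) ∧
    guardSat c p.1 p.2 tr.2.2.2.1 ∧
    c'.st p.1 p.2 = tr.2.2.2.2 ∧
    (∀ x, (x ∈ tr.2.2.1 → c'.cl p.1 p.2 x = 0) ∧
      (x ∉ tr.2.2.1 → c'.cl p.1 p.2 x = c.cl p.1 p.2 x)) ∧
    ∀ q : Σ h, Fin (n h), q ≠ p → c'.st q.1 q.2 = c.st q.1 q.2 ∧ c'.cl q.1 q.2 = c.cl q.1 q.2

lemma syncStep_iff_exists_fires : SyncStep c c' ↔ ∃ p, Fires p c c' := by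
  rw [Sigma.exists]
  rfl

lemma DelayStep.project (f : Selection m n) {d : NNReal} (h : DelayStep d c c') :
    DelayStep d (c.project f) (c'.project f) := by
  obtain ⟨hst, hcl, hinv⟩ := h
  refine ⟨?_, fun l i => hcl l (f l i), fun l i => hinv l (f l i)⟩
  simp only [Config.project, hst]

lemma Fires.project {f : Selection m n} {p : Σ l, Fin (m l)} (h : Fires (f.inst p) c c') :
    Fires p (c.project f) (c'.project f) := by
  obtain ⟨tr, htr, hsrc, hclock, hguard, htgt, hreset, hother⟩ := h
  exact ⟨tr, htr, hsrc, hclock, fun q hq => hguard (f.inst q) (f.inst.injective.ne hq),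
    htgt, hreset, fun q hq => hother (f.inst q) (f.inst.injective.ne hq)⟩

lemma Fires.project_eq {f : Selection m n} {p : Σ l, Fin (n l)} (h : Fires p c c')
    (hp : p ∉ Set.range f.inst) : c'.project f = c.project f := by
  obtain ⟨_, _, _, _, _, _, _, hother⟩ := h
  have hfix (l : Fin k) (i : Fin (m l)) := hother (f.inst ⟨l, i⟩) fun e => hp ⟨_, e⟩
  exact Config.eq_of_st_cl (funext₂ fun l i => (hfix l i).1) (funext₂ fun l i => (hfix l i).2)

/-- A step in which instance `p` takes part: a delay, or a transition fired by `p`. -/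
def StepBy (p : Σ l, Fin (n l)) (c c' : Config A n) (t t' : NNReal) : Prop :=
  (∃ d : NNReal, 0 < d ∧ DelayStep d c c' ∧ t' = t + d) ∨ (Fires p c c' ∧ t' = t)

lemma Step.exists_stepBy [Nonempty (Σ l, Fin (n l))] (h : Step c c' t t') :
    ∃ p, StepBy p c c' t t' := by
  rcases h with hdelay | ⟨hsync, ht⟩
  · exact ⟨Classical.arbitrary _, Or.inl hdelay⟩
  · exact (syncStep_iff_exists_fires.1 hsync).imp fun p hp => Or.inr ⟨hp, ht⟩

lemma StepBy.project {f : Selection m n} {p : Σ l, Fin (m l)} (h : StepBy (f.inst p) c c' t t') :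
    Step (c.project f) (c'.project f) t t' := by
  rcases h with ⟨d, hd, hdelay, ht⟩ | ⟨hfires, ht⟩
  · exact Or.inl ⟨d, hd, hdelay.project f, ht⟩
  · exact Or.inr ⟨syncStep_iff_exists_fires.2 ⟨p, hfires.project⟩, ht⟩

lemma Step.project_or_eq (f : Selection m n) (h : Step c c' t t') :
    Step (c.project f) (c'.project f) t t' ∨ (c'.project f = c.project f ∧ t' = t) := by
  rcases h with ⟨d, hd, hdelay, ht⟩ | ⟨hsync, ht⟩
  · exact Or.inl (Or.inl ⟨d, hd, hdelay.project f, ht⟩)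
  · obtain ⟨p, hp⟩ := syncStep_iff_exists_fires.1 hsync
    by_cases hpf : p ∈ Set.range f.inst
    · obtain ⟨q, rfl⟩ := hpf
      exact Or.inl (StepBy.project (Or.inr ⟨hp, ht⟩))
    · exact Or.inr ⟨hp.project_eq hpf, ht⟩

end Projection

/-! ### Projections of timed computations -/

section ProjectsTo

variable {A : ConjPNTA k} {n m : Fin k → ℕ} {c₀ : Config A n} {c₀' : Config A m}
  {f : Selection m n} {x : TimedComp A n c₀} {y : TimedComp A m c₀'} {r : ℕ → ℕ}

lemma TimedComp.exists_seq_eq_some {v : ℕ} (h : (x.seq v).isSome) :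
    ∃ c t, x.seq v = some (c, t) := by
  obtain ⟨⟨c, t⟩, hct⟩ := Option.isSome_iff_exists.1 h
  exact ⟨c, t, hct⟩

lemma TimedComp.isSome_of_le {u v : ℕ} (huv : u ≤ v) (h : (x.seq v).isSome) :
    (x.seq u).isSome := by
  induction huv with
  | refl => exact h
  | step _ ih => exact ih (x.downward _ h)

lemma TimedComp.isSome_iff_le_of_last {v w : ℕ} (hv : (x.seq v).isSome)
    (hlast : x.seq (v + 1) = none) : (x.seq w).isSome ↔ w ≤ v := by
  refine ⟨fun hw => ?_, fun hwv => isSome_of_le hwv hv⟩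
  by_contra! hvw
  simpa [hlast] using isSome_of_le hvw hw

lemma TimedComp.exists_last (h : ¬ x.Infinite) :
    ∃ v c t, x.seq v = some (c, t) ∧ x.seq (v + 1) = none := by
  by_contra! hcon
  refine h fun v => ?_
  induction v with
  | zero => simp only [x.zero_def, Option.isSome_some]
  | succ v ih =>
    obtain ⟨c, t, hct⟩ := exists_seq_eq_some ih
    exact Option.isSome_iff_ne_none.2 (hcon v c t hct)

/-- `y` is `x` as seen by the instances selected by `f`, where the reindexing `r` sends each
position of `x` to the position of `y` it collapses to. -/
structure ProjectsTo (f : Selection m n) (x : TimedComp A n c₀) (y : TimedComp A m c₀')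
    (r : ℕ → ℕ) : Prop where
  monotone : Monotone r
  seq_eq : ∀ {v c t}, x.seq v = some (c, t) → y.seq (r v) = some (c.project f, t)
  exists_of_isSome : ∀ {w}, (y.seq w).isSome → ∃ v, (x.seq v).isSome ∧ r v = w

namespace ProjectsTo

variable (h : ProjectsTo f x y r)

include h

lemma isSome {v : ℕ} (hv : (x.seq v).isSome) : (y.seq (r v)).isSome := by
  obtain ⟨c, t, hct⟩ := TimedComp.exists_seq_eq_some hv
  simp only [h.seq_eq hct, Option.isSome_some]

lemma exists_succ {w : ℕ} (hw : (y.seq (w + 1)).isSome) :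
    ∃ v, (x.seq (v + 1)).isSome ∧ r v = w ∧ r (v + 1) = w + 1 := by
  classical
  have hex := h.exists_of_isSome hw
  obtain ⟨hsome, hr⟩ := Nat.find_spec hex
  obtain ⟨u, -, hruw⟩ := h.exists_of_isSome (y.downward w hw)
  have hlt : u < Nat.find hex := h.monotone.reflect_lt (by omega)
  obtain ⟨v, hv⟩ : ∃ v, Nat.find hex = v + 1 := Nat.exists_eq_add_one.2 (by omega)
  rw [hv] at hsome hr hlt
  have hle : r v ≤ w + 1 := hr ▸ h.monotone v.le_succ
  have hge : w ≤ r v := hruw ▸ h.monotone (Nat.le_of_lt_succ hlt)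
  have hne : r v ≠ w + 1 := fun e =>
    Nat.find_min hex (m := v) (by omega) ⟨x.downward v hsome, e⟩
  exact ⟨v, hsome, by omega, hr⟩

lemma seq_succ_eq_none {v : ℕ} (hlast : x.seq (v + 1) = none) : y.seq (r v + 1) = none := by
  by_contra hne
  obtain ⟨u, hu, -, hru⟩ := h.exists_succ (Option.isSome_iff_ne_none.2 hne)
  have huv : u < v := by
    by_contra! hvu
    simpa [hlast] using TimedComp.isSome_of_le (Nat.succ_le_succ hvu) hu
  have hle : r (u + 1) ≤ r v := h.monotone huv
  omega

lemma infinite_of_infinite (hy : y.Infinite) : x.Infinite := by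
  by_contra hx
  obtain ⟨v, -, -, -, hlast⟩ := TimedComp.exists_last hx
  simpa only [h.seq_succ_eq_none hlast, Option.isSome_none, Bool.false_eq_true] using hy (r v + 1)

lemma infinite_of_surjective (hx : x.Infinite) (hr : Function.Surjective r) : y.Infinite :=
  hr.forall.2 fun v => h.isSome (hx v)

lemma iSup_timeAt_eq (hx : x.Infinite) (hy : y.Infinite) :
    ⨆ v, (y.timeAt v : ℝ≥0∞) = ⨆ v, (x.timeAt v : ℝ≥0∞) := by
  have hr : Function.Surjective r := fun w => (h.exists_of_isSome (hy w)).imp fun _ hv => hv.2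
  refine (hr.iSup_congr r fun v => ?_).symm
  obtain ⟨c, t, hct⟩ := TimedComp.exists_seq_eq_some (hx v)
  simp only [TimedComp.timeAt, hct, h.seq_eq hct, Option.map_some, Option.getD_some]

lemma exists_last_of_last (hinf : x.Infinite → y.Infinite) {w : ℕ} {c' : Config A m} {t : NNReal}
    (hw : y.seq w = some (c', t)) (hlast : y.seq (w + 1) = none) :
    ∃ v c, x.seq v = some (c, t) ∧ x.seq (v + 1) = none ∧ c' = c.project f := by
  have hx : ¬ x.Infinite := fun hx => by simpa [hlast] using hinf hx (w + 1)
  obtain ⟨v, c, t', hv, hvlast⟩ := TimedComp.exists_last hx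
  have hrv : r v = w := le_antisymm
    ((TimedComp.isSome_iff_le_of_last (by simp [hw]) hlast).1 (h.isSome (by simp [hv])))
    ((TimedComp.isSome_iff_le_of_last (h.isSome (by simp [hv])) (h.seq_succ_eq_none hvlast)).1
      (by simp [hw]))
  have heq := h.seq_eq hv
  rw [hrv, hw] at heq
  obtain ⟨rfl, rfl⟩ := Prod.mk.inj (Option.some.inj heq)
  exact ⟨v, c, hv, hvlast, rfl⟩

lemma induces (hinf : x.Infinite → y.Infinite) {ρ : SPath A n} (hρ : Induces x ρ) :
    Induces y (ρ.project f) := by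
  obtain ⟨hstep, hlen, hend⟩ := hρ
  refine ⟨fun w d t d' t' hw hw' s hts hst => ?_, fun hy => ?_, fun w c t hw hlast => ?_⟩
  · obtain ⟨v, hv, rfl, hrv⟩ := h.exists_succ (by simp [hw'] : (y.seq (w + 1)).isSome)
    obtain ⟨c, u, hcu⟩ := TimedComp.exists_seq_eq_some (x.downward v hv)
    obtain ⟨c', u', hcu'⟩ := TimedComp.exists_seq_eq_some hv
    obtain ⟨rfl, rfl⟩ := Prod.mk.inj (Option.some.inj (hw.symm.trans (h.seq_eq hcu)))
    obtain ⟨rfl, rfl⟩ :=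
      Prod.mk.inj (Option.some.inj (hw'.symm.trans (hrv ▸ h.seq_eq hcu')))
    obtain ⟨hst', hcl'⟩ := hstep v c t c' t' hcu hcu' s hts hst
    exact ⟨funext₂ fun l i => congrFun₂ hst' l (f l i), fun l i => hcl' l (f l i)⟩
  · have hx := h.infinite_of_infinite hy
    exact (hlen hx).trans (h.iSup_timeAt_eq hx hy).symm
  · obtain ⟨v, d, hv, hvlast, rfl⟩ := h.exists_last_of_last hinf hw hlast
    obtain ⟨hlen', hst', hcl'⟩ := hend v d t hv hvlast
    exact ⟨hlen', funext₂ fun l i => congrFun₂ hst' l (f l i), fun l i => hcl' l (f l i)⟩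

end ProjectsTo

/-- The partial sequence of the projected configurations of `x`, before collapsing. -/
def TimedComp.projectSeq (f : Selection m n) (x : TimedComp A n c₀) :
    ℕ → Option (Config A m × NNReal) :=
  fun v => (x.seq v).map (Prod.map (Config.project f) id)

/-- `Step` as a relation between configurations with time stamps. -/
def TimedStep (a b : Config A m × NNReal) : Prop := Step a.1 b.1 a.2 b.2

lemma TimedComp.isSome_projectSeq_of_succ (f : Selection m n) (x : TimedComp A n c₀) (v : ℕ)
    (h : (x.projectSeq f (v + 1)).isSome) : (x.projectSeq f v).isSome := by
  simp only [projectSeq, Option.isSome_map] at h ⊢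
  exact x.downward v h

lemma TimedComp.timedStep_or_eq_projectSeq (f : Selection m n) (x : TimedComp A n c₀) (v : ℕ)
    (a b : Config A m × NNReal) (ha : x.projectSeq f v = some a)
    (hb : x.projectSeq f (v + 1) = some b) : TimedStep a b ∨ b = a := by
  obtain ⟨⟨c, t⟩, hct, rfl⟩ := Option.map_eq_some_iff.1 ha
  obtain ⟨⟨c', t'⟩, hct', rfl⟩ := Option.map_eq_some_iff.1 hb
  exact ((x.step v c t c' t' hct hct').project_or_eq f).imp_right fun h => Prod.ext h.1 h.2

/-- The computation of the instances selected by `f`, without the steps none of them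
takes part in. -/
noncomputable def TimedComp.project (f : Selection m n) (x : TimedComp A n c₀) :
    TimedComp A m (c₀.project f) where
  seq := collapse TimedStep (x.projectSeq f)
  zero_def := by
    have hzero : x.projectSeq f 0 = some (c₀.project f, 0) := by
      simp only [projectSeq, x.zero_def, Option.map_some, Prod.map_apply, id_eq]
    rw [← stepCount_zero (R := TimedStep) (s := x.projectSeq f), ← hzero]
    exact collapse_stepCount (x.isSome_projectSeq_of_succ f) (x.timedStep_or_eq_projectSeq f)
      (Option.isSome_of_mem hzero)
  downward := fun w hw => by
    obtain ⟨b, hb⟩ := Option.isSome_iff_exists.1 hw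
    obtain ⟨a, ha, -⟩ := exists_rel_of_collapse_succ (x.isSome_projectSeq_of_succ f)
      (x.timedStep_or_eq_projectSeq f) hb
    exact Option.isSome_of_mem ha
  step := fun w c t c' t' hw hw' => by
    obtain ⟨a, ha, hstep⟩ := exists_rel_of_collapse_succ (x.isSome_projectSeq_of_succ f)
      (x.timedStep_or_eq_projectSeq f) hw'
    obtain rfl := Option.some.inj (hw.symm.trans ha)
    exact hstep

lemma TimedComp.projectsTo_project (f : Selection m n) (x : TimedComp A n c₀) :
    ProjectsTo f x (x.project f) (stepCount TimedStep (x.projectSeq f)) where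
  monotone := monotone_stepCount
  seq_eq := fun {v c t} hv => by
    have hct : x.projectSeq f v = some (c.project f, t) := by
      simp only [projectSeq, hv, Option.map_some, Prod.map_apply, id_eq]
    exact (collapse_stepCount (x.isSome_projectSeq_of_succ f) (x.timedStep_or_eq_projectSeq f)
      (Option.isSome_of_mem hct)).trans hct
  exists_of_isSome := fun {w} hw => by
    obtain ⟨a, ha⟩ := Option.isSome_iff_exists.1 hw
    obtain ⟨v, hv, hvw⟩ := exists_of_collapse_eq_some (x.isSome_projectSeq_of_succ f)
      (x.timedStep_or_eq_projectSeq f) ha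
    refine ⟨v, ?_, hvw⟩
    simpa only [projectSeq, Option.isSome_map] using Option.isSome_of_mem hv

end ProjectsTo

/-! ### Preservation of path properties -/

section Preservation

variable {A : ConjPNTA k} {n m : Fin k → ℕ} {c₀ : Config A n} {f : Selection m n} {ρ : SPath A n}

lemma TimedComp.isStepAt_projectSeq {x : TimedComp A n c₀} {p : Σ l, Fin (m l)} {v : ℕ}
    {c c' : Config A n} {t t' : NNReal} (hv : x.seq v = some (c, t))
    (hv' : x.seq (v + 1) = some (c', t')) (hp : StepBy (f.inst p) c c' t t') :
    IsStepAt TimedStep (x.projectSeq f) v :=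
  ⟨(c.project f, t), (c'.project f, t'), by simp [projectSeq, hv], by simp [projectSeq, hv'],
    hp.project⟩

/-- Instance `p` takes part in infinitely many steps of `x`. -/
def TimedComp.InfinitelyOften (x : TimedComp A n c₀) (p : Σ l, Fin (n l)) : Prop :=
  {v | ∃ c t c' t', x.seq v = some (c, t) ∧ x.seq (v + 1) = some (c', t') ∧
    StepBy p c c' t t'}.Infinite

lemma TimedComp.Infinite.exists_infinitelyOften [Nonempty (Σ l, Fin (n l))]
    {x : TimedComp A n c₀} (hx : x.Infinite) : ∃ p, x.InfinitelyOften p := by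
  have howner (v : ℕ) : ∃ p c t c' t', x.seq v = some (c, t) ∧ x.seq (v + 1) = some (c', t') ∧
      StepBy p c c' t t' := by
    obtain ⟨c, t, hv⟩ := TimedComp.exists_seq_eq_some (hx v)
    obtain ⟨c', t', hv'⟩ := TimedComp.exists_seq_eq_some (hx (v + 1))
    obtain ⟨p, hp⟩ := (x.step v c t c' t' hv hv').exists_stepBy
    exact ⟨p, c, t, c', t', hv, hv', hp⟩
  choose owner howner using howner
  obtain ⟨p, hp⟩ := Finite.exists_infinite_fiber owner
  refine ⟨p, (Set.infinite_coe_iff.1 hp).mono fun v hv => ?_⟩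
  obtain rfl : owner v = p := hv
  exact howner v

lemma TimedComp.Infinite.project {x : TimedComp A n c₀} (hx : x.Infinite) {p : Σ l, Fin (m l)}
    (hp : x.InfinitelyOften (f.inst p)) : (x.project f).Infinite := by
  refine (x.projectsTo_project f).infinite_of_surjective hx (surjective_stepCount (hp.mono ?_))
  rintro v ⟨c, t, c', t', hv, hv', hby⟩
  exact TimedComp.isStepAt_projectSeq hv hv' hby

lemma SPath.isInfiniteFrom_project {x : TimedComp A n c₀} (hρ : Induces x ρ) (hx : x.Infinite)
    {p : Σ l, Fin (m l)} (hp : x.InfinitelyOften (f.inst p)) :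
    (ρ.project f).IsInfiniteFrom (c₀.project f) :=
  ⟨x.project f, (x.projectsTo_project f).induces (fun _ => hx.project hp) hρ, hx.project hp⟩

lemma TimedComp.Finite.not_infinite {x : TimedComp A n c₀} (hx : x.Finite) : ¬ x.Infinite := by
  obtain ⟨v, hv⟩ := hx
  exact fun hinf => by simpa [hv] using hinf v

lemma SPath.IsFiniteFrom.project (hρ : ρ.IsFiniteFrom c₀) (f : Selection m n) :
    (ρ.project f).IsFiniteFrom (c₀.project f) := by
  obtain ⟨x, hxρ, hx⟩ := hρ
  have hproj := x.projectsTo_project f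
  obtain ⟨v, -, -, -, hlast⟩ := TimedComp.exists_last hx.not_infinite
  exact ⟨x.project f, hproj.induces (fun hinf => absurd hinf hx.not_infinite) hxρ, _,
    hproj.seq_succ_eq_none hlast⟩

/-- No transition is enabled at `c`. -/
def Config.IsDeadlock (c : Config A n) : Prop :=
  ∀ c' : Config A n, ¬ ((∃ d : NNReal, 0 < d ∧ DelayStep d c c') ∨ SyncStep c c')

/-- The invariant of instance `p` rules out every delay of positive duration. -/
def BlocksTime (c : Config A n) (p : Σ l, Fin (n l)) : Prop :=
  ∀ d : NNReal, 0 < d → ∃ d' ≤ d, ¬ (A.inv p.1 (c.st p.1 p.2)).sat fun x => c.cl p.1 p.2 x + d'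

lemma Config.IsDeadlock.exists_blocksTime [Nonempty (Σ l, Fin (n l))] {c : Config A n}
    (hc : c.IsDeadlock) : ∃ p, BlocksTime c p := by
  by_contra! hcon
  simp only [BlocksTime, not_forall, not_exists, not_and, not_not] at hcon
  choose D hDpos hD using hcon
  obtain ⟨q, hq⟩ := Finite.exists_min D
  have hsat (l : Fin k) (i : Fin (n l)) (d : NNReal) (hd : d ≤ D q) :
      (A.inv l (c.st l i)).sat fun x => c.cl l i x + d :=
    hD ⟨l, i⟩ d (hd.trans (hq ⟨l, i⟩))
  exact hc ⟨c.st, fun l i x => c.cl l i x + D q, fun l i => hsat l i _ le_rfl⟩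
    (Or.inl ⟨D q, hDpos q, rfl, fun _ _ _ => rfl, hsat⟩)

/-- The elements of `T` are in all the states that `st` takes and, for every `i`, those other than
`i` are in all the states that `st` takes at elements other than `i`. The second condition is there
because a guard of an instance constrains all instances but that one. -/
def IsRepresentative {ι S : Type*} (st : ι → S) (T : Set ι) : Prop :=
  ∀ i j, ∃ q ∈ T, st q = st j ∧ (q = i → j = i)

lemma IsRepresentative.mono {ι S : Type*} {st : ι → S} {T T' : Set ι} (h : IsRepresentative st T)
    (hT : T ⊆ T') : IsRepresentative st T' := fun i j =>
  (h i j).imp fun _ hq => ⟨hT hq.1, hq.2⟩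

lemma guardSat_of_project {c : Config A n}
    (hf : ∀ l, IsRepresentative (c.st l) (Set.range (f l))) {l : Fin k} {i : Fin (m l)}
    {γ : ∀ h, Set (A.State h)} (h : guardSat (c.project f) l i γ) : guardSat c l (f l i) γ := by
  rintro ⟨l', j⟩ hj
  rcases eq_or_ne l' l with rfl | hl
  · obtain ⟨_, ⟨q, rfl⟩, hq, hqi⟩ := hf l' (f l' i) j
    refine hq ▸ h ⟨l', q⟩ fun e => hj ?_
    obtain rfl := eq_of_heq (Sigma.mk.inj e).2
    rw [hqi rfl]
  · obtain ⟨_, ⟨q, rfl⟩, hq, -⟩ := hf l' j j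
    exact hq ▸ h ⟨l', q⟩ fun e => hl (congrArg Sigma.fst e)

lemma Config.exists_update (c : Config A n) (p : Σ l, Fin (n l)) {s : A.State p.1}
    {u : A.Clock p.1 → NNReal} (hsu : (A.inv p.1 s).sat u) :
    ∃ c' : Config A n, c'.st p.1 p.2 = s ∧ c'.cl p.1 p.2 = u ∧
      ∀ q : Σ l, Fin (n l), q ≠ p →
        c'.st q.1 q.2 = c.st q.1 q.2 ∧ c'.cl q.1 q.2 = c.cl q.1 q.2 := by
  classical
  let g : ∀ q : Σ l, Fin (n l),
      {su : A.State q.1 × (A.Clock q.1 → NNReal) // (A.inv q.1 su.1).sat su.2} :=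
    Function.update (fun q => ⟨(c.st q.1 q.2, c.cl q.1 q.2), c.inv_sat q.1 q.2⟩) p ⟨(s, u), hsu⟩
  have hp : g p = ⟨(s, u), hsu⟩ := Function.update_self ..
  refine ⟨⟨fun l i => (g ⟨l, i⟩).1.1, fun l i => (g ⟨l, i⟩).1.2, fun l i => (g ⟨l, i⟩).2⟩,
    congrArg (fun a => a.1.1) hp, congrArg (fun a => a.1.2) hp, fun q hq => ?_⟩
  have hq' : g q = ⟨(c.st q.1 q.2, c.cl q.1 q.2), c.inv_sat q.1 q.2⟩ :=
    Function.update_of_ne hq ..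
  exact ⟨congrArg (fun a => a.1.1) hq', congrArg (fun a => a.1.2) hq'⟩

lemma exists_fires_of_project {c : Config A n}
    (hf : ∀ l, IsRepresentative (c.st l) (Set.range (f l))) {p : Σ l, Fin (m l)} {c' : Config A m}
    (h : Fires p (c.project f) c') : ∃ c'' : Config A n, Fires (f.inst p) c c'' := by
  obtain ⟨tr, htr, hsrc, hclock, hguard, htgt, hreset, -⟩ := h
  obtain ⟨c'', hst, hcl, hother⟩ := c.exists_update (f.inst p) (c'.inv_sat p.1 p.2)
  exact ⟨c'', tr, htr, hsrc, hclock, guardSat_of_project hf hguard, hst.trans htgt,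
    fun x => hcl ▸ hreset x, hother⟩

lemma Config.IsDeadlock.project {c : Config A n} (hc : c.IsDeadlock) {p : Σ l, Fin (m l)}
    (hp : BlocksTime c (f.inst p)) (hf : ∀ l, IsRepresentative (c.st l) (Set.range (f l))) :
    (c.project f).IsDeadlock := by
  rintro c' (⟨d, hd, -, -, hinv⟩ | hsync)
  · obtain ⟨d', hd', hnot⟩ := hp d hd
    exact hnot (hinv p.1 p.2 d' hd')
  · obtain ⟨q, hq⟩ := syncStep_iff_exists_fires.1 hsync
    obtain ⟨c'', hc''⟩ := exists_fires_of_project hf hq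
    exact hc c'' (Or.inr (syncStep_iff_exists_fires.2 ⟨f.inst q, hc''⟩))

lemma SPath.isDeadlockedFrom_project {x : TimedComp A n c₀} (hρ : Induces x ρ) {v : ℕ}
    {c : Config A n} {t : NNReal} (hv : x.seq v = some (c, t)) (hlast : x.seq (v + 1) = none)
    (hc : (c.project f).IsDeadlock) : (ρ.project f).IsDeadlockedFrom (c₀.project f) := by
  have hfin : x.Finite := ⟨v + 1, hlast⟩
  have hproj := x.projectsTo_project f
  exact ⟨x.project f, hproj.induces (fun hinf => absurd hinf hfin.not_infinite) hρ,
    _, _, t, hproj.seq_eq hv, hproj.seq_succ_eq_none hlast, hc⟩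

end Preservation

lemma satIMTL_iff_of_forall_atom {k' : ℕ} {A : ConjPNTA k} {A' : ConjPNTA k'} {n : Fin k → ℕ}
    {m : Fin k' → ℕ} {α : Type} {val : α → Config A n → Prop} {val' : α → Config A' m → Prop}
    (Φ : IMTL α) {ρ : SPath A n} {ρ' : SPath A' m} (hlen : ρ.len = ρ'.len)
    (hval : ∀ a s, val a (ρ.toFun s) ↔ val' a (ρ'.toFun s)) :
    satIMTL val Φ ρ ↔ satIMTL val' Φ ρ' := by
  induction Φ generalizing ρ ρ' with
  | tt => exact Iff.rfl
  | atom a => exact hval a 0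
  | and φ ψ ihφ ihψ => exact and_congr (ihφ hlen hval) (ihψ hlen hval)
  | not φ ih => exact not_congr (ih hlen hval)
  | untl op q φ ψ ihφ ihψ =>
    have hsuffix (t : NNReal) : (ρ.suffix t).len = (ρ'.suffix t).len := by
      simp only [SPath.suffix, hlen]
    simp only [satIMTL, hlen, fun t => ihφ (hsuffix t) fun a s => hval a (t + s),
      fun t => ihψ (hsuffix t) fun a s => hval a (t + s)]

lemma satIMTL_project_iff {A : ConjPNTA k} {n m : Fin k → ℕ} (f : Selection m n) (l : Fin k)
    (i : Fin (m l)) (Φ : IMTL (A.State l)) (ρ : SPath A n) :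
    satIMTL (fun s c => c.st l i = s) Φ (ρ.project f) ↔
      satIMTL (fun s c => c.st l (f l i) = s) Φ ρ :=
  satIMTL_iff_of_forall_atom Φ rfl fun _ _ => Iff.rfl

/-! ### Existence of selections -/

lemma exists_isRepresentative_card_le {ι S : Type*} [Fintype S] (st : ι → S) {B : Set ι}
    (hB : B.Subsingleton) :
    ∃ T : Finset ι, B ⊆ T ∧ IsRepresentative st T ∧ T.card ≤ 2 * Fintype.card S := by
  classical
  rcases isEmpty_or_nonempty ι with hι | hι
  · exact ⟨∅, fun b => isEmptyElim b, fun i => isEmptyElim i, by simp⟩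
  obtain ⟨b, hb⟩ : ∃ b, B ⊆ {b} := hB.eq_empty_or_singleton.elim
    (fun h => ⟨Classical.arbitrary ι, by simp [h]⟩) fun ⟨b, h⟩ => ⟨b, h.le⟩
  obtain ⟨first, hfirst, hfirst_b⟩ :
      ∃ first : S → ι, (∀ j, st (first (st j)) = st j) ∧ first (st b) = b := by
    refine ⟨Function.update (Function.invFun st) (st b) b, fun j => ?_, Function.update_self ..⟩
    rcases eq_or_ne (st j) (st b) with hj | hj
    · rw [hj, Function.update_self]
    · rw [Function.update_of_ne hj]
      exact Function.invFun_eq ⟨j, rfl⟩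
  have hsecond (s : S) : ∃ q, ∀ j, st j = s → j ≠ first s → st q = s ∧ q ≠ first s := by
    by_cases hs : ∃ q, st q = s ∧ q ≠ first s
    · exact hs.imp fun q hq _ _ _ => hq
    · exact ⟨b, fun j hj hne => absurd ⟨j, hj, hne⟩ hs⟩
  choose second hsecond using hsecond
  refine ⟨Finset.univ.image first ∪ Finset.univ.image second, fun i hi => ?_, fun i j => ?_, ?_⟩
  · obtain rfl := hb hi
    exact Finset.mem_union_left _ (Finset.mem_image.2 ⟨st i, Finset.mem_univ _, hfirst_b⟩)
  · by_cases hji : first (st j) = i ∧ j ≠ i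
    · obtain ⟨rfl, hne⟩ := hji
      obtain ⟨hst, hne'⟩ := hsecond (st j) j rfl hne
      exact ⟨second (st j), by simp, hst, fun e => absurd e hne'⟩
    · exact ⟨first (st j), by simp, hfirst j, fun e => by_contra fun hne => hji ⟨e, hne⟩⟩
  · rw [two_mul]
    exact (Finset.card_union_le _ _).trans (add_le_add Finset.card_image_le Finset.card_image_le)

lemma exists_embedding_subset_range {a b : ℕ} (hab : a ≤ b) {T : Finset (Fin b)}
    (hT : T.card ≤ a) : ∃ g : Fin a ↪ Fin b, ↑T ⊆ Set.range g := by
  obtain ⟨U, hTU, hU⟩ := Finset.exists_superset_card_eq hT (by simpa using hab)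
  refine ⟨(U.orderEmbOfFin hU).toEmbedding, ?_⟩
  simpa only [RelEmbedding.coe_toEmbedding, Finset.range_orderEmbOfFin, Finset.coe_subset] using hTU

section Selection

variable {n m : Fin k → ℕ}

lemma exists_selection_subset_range (hmn : m ≤ n) {T : ∀ l, Finset (Fin (n l))}
    (hT : ∀ l, (T l).card ≤ m l) {l₀ : Fin k} {i : Fin (n l₀)} (hi : i ∈ T l₀) (j : Fin (m l₀)) :
    ∃ f : Selection m n, f l₀ j = i ∧ ∀ l, ↑(T l) ⊆ Set.range (f l) := by
  choose g hg using fun l => exists_embedding_subset_range (hmn l) (hT l)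
  obtain ⟨j', hj'⟩ := hg l₀ hi
  let σ : ∀ l, Equiv.Perm (Fin (m l)) := Function.update 1 l₀ (Equiv.swap j j')
  refine ⟨fun l => (σ l).toEmbedding.trans (g l), ?_, fun l => ?_⟩
  · have hσ : σ l₀ j = j' := by simp [σ]
    exact (congrArg (g l₀) hσ).trans hj'
  · exact (hg l).trans ((σ l).surjective.range_comp (g l)).ge

lemma exists_selection_tracking (hmn : m ≤ n) {l₀ : Fin k} (i : Fin (n l₀)) (j : Fin (m l₀))
    (T : ∀ l, Finset (Fin (n l)))
    (hT : ∀ l, min ((T l).card + if l = l₀ then 1 else 0) (n l) ≤ m l) :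
    ∃ f : Selection m n, f l₀ j = i ∧ ∀ l, ↑(T l) ⊆ Set.range (f l) := by
  let T' : ∀ l, Finset (Fin (n l)) := Function.update T l₀ (insert i (T l₀))
  have hTT' (l : Fin k) : T l ⊆ T' l := by
    rcases eq_or_ne l l₀ with rfl | hl
    · simp [T']
    · simp [T', hl]
  have hcard (l : Fin k) : (T' l).card ≤ m l := by
    refine (le_min ?_ (card_finset_fin_le _)).trans (hT l)
    rcases eq_or_ne l l₀ with rfl | hl
    · simpa [T'] using Finset.card_insert_le i (T l)
    · simp [T', hl]
  obtain ⟨f, hf, hrange⟩ := exists_selection_subset_range hmn hcard (i := i) (by simp [T']) j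
  exact ⟨f, hf, fun l => (Finset.coe_subset.2 (hTT' l)).trans (hrange l)⟩

lemma exists_inst_eq {f : Selection m n} {p : Σ l, Fin (n l)} (hp : p.2 ∈ Set.range (f p.1)) :
    ∃ q, f.inst q = p := by
  obtain ⟨q, hq⟩ := hp
  exact ⟨⟨p.1, q⟩, Sigma.ext rfl (heq_of_eq hq)⟩

end Selection

/-! ### Cutoffs -/

section Cutoff

/-- The number of instances of template `l`, besides a tracked one, that suffices for a given
existential path quantifier; the value at universal quantifiers is junk. -/
def untrackedCutoff (A : ConjPNTA k) : PathQ → Fin k → ℕ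
  | .E, l => 2 * A.size l
  | .Einf, _ => 1
  | .Efin, _ => 0
  | _, _ => 0

variable {A : ConjPNTA k} {n m : Fin k → ℕ} {c₀ : Config A n} {ρ : SPath A n} {l₀ : Fin k}

lemma one_le_untrackedCutoff_E (l : Fin k) : 1 ≤ untrackedCutoff A .E l := by
  have := A.size_pos l
  simp only [untrackedCutoff]
  omega

lemma exists_project_isInfiniteFrom (hmn : m ≤ n) (i : Fin (n l₀)) (j : Fin (m l₀))
    (hm : ∀ l, min (1 + if l = l₀ then 1 else 0) (n l) ≤ m l) (hρ : ρ.IsInfiniteFrom c₀) :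
    ∃ f : Selection m n, f l₀ j = i ∧ (ρ.project f).IsInfiniteFrom (c₀.project f) := by
  obtain ⟨x, hxρ, hx⟩ := hρ
  have : Nonempty (Σ l, Fin (n l)) := ⟨⟨l₀, i⟩⟩
  obtain ⟨p, hp⟩ := hx.exists_infinitelyOften
  let T (l : Fin k) : Finset (Fin (n l)) := {q | (⟨l, q⟩ : Σ l, Fin (n l)) = p}
  have hT (l : Fin k) : (T l).card ≤ 1 := Finset.card_le_one.2 fun a ha b hb =>
    sigma_mk_injective (β := fun l => Fin (n l))
      ((Finset.mem_filter.1 ha).2.trans (Finset.mem_filter.1 hb).2.symm)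
  obtain ⟨f, hf, hrange⟩ := exists_selection_tracking hmn i j T fun l =>
    (min_le_min_right _ (Nat.add_le_add_right (hT l) _)).trans (hm l)
  obtain ⟨q, rfl⟩ := exists_inst_eq (hrange p.1 (by simp [T]))
  exact ⟨f, hf, SPath.isInfiniteFrom_project hxρ hx hp⟩

lemma exists_project_isFiniteFrom (hmn : m ≤ n) (i : Fin (n l₀)) (j : Fin (m l₀))
    (hρ : ρ.IsFiniteFrom c₀) :
    ∃ f : Selection m n, f l₀ j = i ∧ (ρ.project f).IsFiniteFrom (c₀.project f) := by
  obtain ⟨f, hf, -⟩ := exists_selection_tracking hmn i j (fun _ => ∅) fun l => by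
    rcases eq_or_ne l l₀ with rfl | hl
    · simpa using Or.inl (Nat.succ_le_of_lt j.pos)
    · simp [hl]
  exact ⟨f, hf, hρ.project f⟩

lemma exists_project_isDeadlockedFrom (hmn : m ≤ n) (i : Fin (n l₀)) (j : Fin (m l₀))
    (hm : ∀ l, min (2 * A.size l + if l = l₀ then 1 else 0) (n l) ≤ m l)
    (hρ : ρ.IsDeadlockedFrom c₀) :
    ∃ f : Selection m n, f l₀ j = i ∧ (ρ.project f).IsDeadlockedFrom (c₀.project f) := by
  obtain ⟨x, hxρ, v, c, t, hv, hlast, hc⟩ := hρ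
  change c.IsDeadlock at hc
  have : Nonempty (Σ l, Fin (n l)) := ⟨⟨l₀, i⟩⟩
  obtain ⟨p, hp⟩ := hc.exists_blocksTime
  choose T hpT hrep hT using fun l =>
    let := A.stateFintype l
    exists_isRepresentative_card_le (c.st l)
      (Set.subsingleton_singleton.preimage (s := {p})
        (sigma_mk_injective (β := fun l => Fin (n l)) (i := l)))
  obtain ⟨f, hf, hrange⟩ := exists_selection_tracking hmn i j T fun l =>
    (min_le_min_right _ (Nat.add_le_add_right (hT l) _)).trans (hm l)
  obtain ⟨q, rfl⟩ := exists_inst_eq (hrange p.1 (hpT p.1 rfl))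
  exact ⟨f, hf, SPath.isDeadlockedFrom_project hxρ hv hlast
    (hc.project hp fun l => (hrep l).mono (hrange l))⟩

end Cutoff

theorem conjunctive_bounding_ii_general (A : ConjPNTA k) {n m : Fin k → ℕ} (hmn : m ≤ n)
    {l₀ : Fin k} (i : Fin (n l₀)) (j : Fin (m l₀)) (Φ : IMTL (A.State l₀))
    {Q : PathQ} (hQ : Q = PathQ.E ∨ Q = PathQ.Einf ∨ Q = PathQ.Efin)
    (hm : ∀ l, min (untrackedCutoff A Q l + if l = l₀ then 1 else 0) (n l) ≤ m l)
    (h : SatQ A n (fun s c => c.st l₀ i = s) Q Φ) : SatQ A m (fun s c => c.st l₀ j = s) Q Φ := by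
  have hsat {f : Selection m n} (hf : f l₀ j = i) {ρ : SPath A n}
      (hρ : satIMTL (fun s c => c.st l₀ i = s) Φ ρ) :
      satIMTL (fun s c => c.st l₀ j = s) Φ (ρ.project f) := by
    subst hf
    exact (satIMTL_project_iff f l₀ j Φ ρ).2 hρ
  rcases hQ with rfl | rfl | rfl
  · obtain ⟨ρ, hinf | hdead, hρ⟩ := h
    · obtain ⟨f, hf, hinf'⟩ := exists_project_isInfiniteFrom hmn i j (fun l =>
        (min_le_min_right _ (Nat.add_le_add_right (one_le_untrackedCutoff_E l) _)).trans (hm l))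
        hinf
      exact ⟨ρ.project f, Or.inl hinf', hsat hf hρ⟩
    · obtain ⟨f, hf, hdead'⟩ := exists_project_isDeadlockedFrom hmn i j hm hdead
      exact ⟨ρ.project f, Or.inr hdead', hsat hf hρ⟩
  · obtain ⟨ρ, hinf, hρ⟩ := h
    obtain ⟨f, hf, hinf'⟩ := exists_project_isInfiniteFrom hmn i j hm hinf
    exact ⟨ρ.project f, hinf', hsat hf hρ⟩
  · obtain ⟨ρ, hfin, hρ⟩ := h
    obtain ⟨f, hf, hfin'⟩ := exists_project_isFiniteFrom hmn i j hfin
    exact ⟨ρ.project f, hfin', hsat hf hρ⟩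

lemma two_mono_right {a b b' : ℕ} (hb : b ≤ b') : two a b ≤ two a b' := by
  intro l
  simp only [two]
  split_ifs
  exacts [le_rfl, hb]

lemma untrackedCutoff_one_le_cutoffOther (A : ConjPNTA 2) (Q : PathQ) :
    untrackedCutoff A Q 1 ≤ cutoffOther A Q := by
  cases Q <;> simp [untrackedCutoff, cutoffOther]

lemma min_untrackedCutoff_le_two (A : ConjPNTA 2) (Q : PathQ) (n : ℕ) (l : Fin 2) :
    min (untrackedCutoff A Q l + if l = 0 then 1 else 0) (two 1 n l) ≤
      two 1 (cutoffOther A Q) l := by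
  match l with
  | 0 => exact min_le_right _ _
  | 1 => exact (min_le_left _ _).trans (untrackedCutoff_one_le_cutoffOther A Q)

theorem conjunctive_bounding_ii (A : ConjPNTA 2) (Φ : IMTL (A.State 0))
    (Q : PathQ) (hQ : Q = PathQ.E ∨ Q = PathQ.Einf ∨ Q = PathQ.Efin)
    (n : ℕ) (hn : cutoffOther A Q ≤ n) :
    SatQ A (two 1 n) (valFirst A (two 1 n) 0 Nat.one_pos) Q Φ →
      SatQ A (two 1 (cutoffOther A Q))
        (valFirst A (two 1 (cutoffOther A Q)) 0 Nat.one_pos) Q Φ :=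
  conjunctive_bounding_ii_general A (two_mono_right hn) _ _ Φ hQ
    (min_untrackedCutoff_le_two A Q n)

end PNTA
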